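/- In a pre-Hilbert left 𝕆-module H, for all u, v ∈ H and p, q ∈ 𝕆 one has ⟨p·u, q·v⟩ = (p·⟨u,v⟩)·conj(q) + [pq, u, v] + ⟨[p,q,v], u⟩, where [p,u,v] := ⟨p·u,v⟩ − p·⟨u,v⟩ is the second associator and [p,q,v] := (pq)·v − p·(q·v) is the left associator. -/

import Mathlib

noncomputable section

/-- The octonions, realized as the Cayley–Dickson double of the quaternions. -/
abbrev 𝕆 : Type := Quaternion ℝ × Quaternion ℝ

/-- Octonion multiplication via the Cayley–Dickson formula
`(a,b)(c,d) = (ac - d̄b, da + bc̄)`. -/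
def omul (x y : 𝕆) : 𝕆 :=
  (x.1 * y.1 - star y.2 * x.2, y.2 * x.1 + x.2 * star y.1)

/-- Octonionic conjugation. -/
def oconj (x : 𝕆) : 𝕆 := (star x.1, -x.2)

/-- The octonion `1`. -/
def oone : 𝕆 := (1, 0)

/-- Real part of an octonion. -/
def ore (x : 𝕆) : ℝ := x.1.re

/-- Embedding of the reals into the octonions. -/
def oreal (r : ℝ) : 𝕆 := ((r : Quaternion ℝ), 0)

/-- Squared norm of an octonion. -/
def onormSq (x : 𝕆) : ℝ := ore (omul x (oconj x))

/-- A pre-Hilbert left `𝕆`-module: a real vector space `H` with an `ℝ`-linear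
left `𝕆`-scalar multiplication `sm` satisfying `1·x = x` and the alternating
left-associator law, together with an `ℝ`-bilinear `𝕆`-valued inner product `inn`
which is `𝕆`-para-linear, hermitian and positive definite. -/
structure PreHilbO (H : Type*) [AddCommGroup H] [Module ℝ H] where
  sm : 𝕆 →ₗ[ℝ] H →ₗ[ℝ] H
  inn : H →ₗ[ℝ] H →ₗ[ℝ] 𝕆
  one_sm : ∀ x : H, sm oone x = x
  alt : ∀ (p q : 𝕆) (x : H),
    sm (omul p q) x - sm p (sm q x) = -(sm (omul q p) x - sm q (sm p x))
  para : ∀ (p : 𝕆) (u v : H), ore (inn (sm p u) v - omul p (inn u v)) = 0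
  herm : ∀ u v : H, inn u v = oconj (inn v u)
  pos : ∀ u : H, ∃ r : ℝ, 0 ≤ r ∧ inn u u = oreal r
  posdef : ∀ u : H, inn u u = 0 → u = 0


/-- Polar form of the octonion norm. -/
def ob (p q : 𝕆) : ℝ := 2 * ore (omul p (oconj q))

/-- Trace of an octonion. -/
def ot (p : 𝕆) : ℝ := 2 * ore p

theorem o_ext {x y : 𝕆} (h1 : x.1.re = y.1.re) (h2 : x.1.imI = y.1.imI) (h3 : x.1.imJ = y.1.imJ)
    (h4 : x.1.imK = y.1.imK) (h5 : x.2.re = y.2.re) (h6 : x.2.imI = y.2.imI)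
    (h7 : x.2.imJ = y.2.imJ) (h8 : x.2.imK = y.2.imK) : x = y :=
  Prod.ext (Quaternion.ext _ _ h1 h2 h3 h4) (Quaternion.ext _ _ h5 h6 h7 h8)

theorem one_c1 : (1 : Quaternion ℝ).re = 1 := rfl

theorem one_c2 : (1 : Quaternion ℝ).imI = 0 := rfl

theorem one_c3 : (1 : Quaternion ℝ).imJ = 0 := rfl

theorem one_c4 : (1 : Quaternion ℝ).imK = 0 := rfl

theorem o_conj (p : 𝕆) : oconj p = ot p • oone - p := by
  apply o_ext <;> simp [oconj, ot, ore, oone, one_c1, one_c2, one_c3, one_c4] <;> ring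

theorem o_jordan (p q : 𝕆) : omul p q + omul q p = ot p • q + ot q • p - ob p q • oone := by
  apply o_ext <;> simp [omul, oconj, ot, ob, ore, oone, one_c1, one_c2, one_c3, one_c4] <;> ring

theorem o_re_conj (p : 𝕆) : ore (oconj p) = ore p := by simp [ore, oconj]

theorem o_conj_mul (p q : 𝕆) : oconj (omul p q) = omul (oconj q) (oconj p) := by
  apply o_ext <;> simp [omul, oconj] <;> ring

theorem o_re_cycle (r p a q : 𝕆) :
    ore (omul r (omul (omul p a) q)) = ore (omul (omul (omul q r) p) a) := by
  simp [omul, ore]; ring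

theorem o_re_assoc (r p a : 𝕆) :
    ore (omul r (omul p a)) = ore (omul (omul r p) a) := by
  simp [omul, ore]; ring

theorem o_re_comm (p a : 𝕆) : ore (omul p a) = ore (omul a p) := by
  simp [omul, ore]; ring

theorem o_re_formula (r x : 𝕆) : ore (omul r x) =
    r.1.re * x.1.re - r.1.imI * x.1.imI - r.1.imJ * x.1.imJ - r.1.imK * x.1.imK
      - r.2.re * x.2.re - r.2.imI * x.2.imI - r.2.imJ * x.2.imJ - r.2.imK * x.2.imK := by
  simp [omul, ore]; ring

theorem o_nondeg {x y : 𝕆} (h : ∀ r, ore (omul r x) = ore (omul r y)) : x = y := by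
  simp only [o_re_formula] at h
  have h1 := h (⟨1,0,0,0⟩, ⟨0,0,0,0⟩)
  have h2 := h (⟨0,1,0,0⟩, ⟨0,0,0,0⟩)
  have h3 := h (⟨0,0,1,0⟩, ⟨0,0,0,0⟩)
  have h4 := h (⟨0,0,0,1⟩, ⟨0,0,0,0⟩)
  have h5 := h (⟨0,0,0,0⟩, ⟨1,0,0,0⟩)
  have h6 := h (⟨0,0,0,0⟩, ⟨0,1,0,0⟩)
  have h7 := h (⟨0,0,0,0⟩, ⟨0,0,1,0⟩)
  have h8 := h (⟨0,0,0,0⟩, ⟨0,0,0,1⟩)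
  apply o_ext <;> linarith

set_option maxHeartbeats 4000000 in
theorem o_key (p q r : 𝕆) :
    omul (omul (oconj q) r) p - omul r (omul p q)
      = ot q • (ot r • p + ot p • r - ob r p • oone) - ob p q • r + ob r p • q
        - ot r • (ot p • q + ot q • p - ob p q • oone)
        - ot (omul p q) • r + ob r (omul p q) • oone := by
  apply o_ext <;>
    simp only [omul, oconj, ot, ob, ore, oone, one_c1, one_c2, one_c3, one_c4, Prod.fst_add,
      Prod.snd_add, Prod.fst_sub, Prod.snd_sub, Prod.smul_fst, Prod.smul_snd, smul_eq_mul,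
      Quaternion.re_add, Quaternion.imI_add, Quaternion.imJ_add, Quaternion.imK_add,
      Quaternion.re_sub, Quaternion.imI_sub, Quaternion.imJ_sub, Quaternion.imK_sub,
      Quaternion.re_neg, Quaternion.imI_neg, Quaternion.imJ_neg, Quaternion.imK_neg,
      Quaternion.re_mul, Quaternion.imI_mul, Quaternion.imJ_mul, Quaternion.imK_mul,
      Quaternion.re_star, Quaternion.imI_star, Quaternion.imJ_star, Quaternion.imK_star,
      Quaternion.re_smul, Quaternion.imI_smul, Quaternion.imJ_smul, Quaternion.imK_smul,
      Quaternion.re_zero, Quaternion.imI_zero, Quaternion.imJ_zero, Quaternion.imK_zero,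
      star_neg, smul_zero] <;> ring

section
variable {H : Type*} [AddCommGroup H] [Module ℝ H] (h : PreHilbO H)

theorem sm_jordan (p q : 𝕆) (u : H) :
    h.sm p (h.sm q u) + h.sm q (h.sm p u)
      = ot p • h.sm q u + ot q • h.sm p u - ob p q • u := by
  have e := h.alt p q u
  have e2 := congrArg (fun z => h.sm z u) (o_jordan p q)
  simp only [map_add, map_sub, map_smul, LinearMap.add_apply, LinearMap.sub_apply,
    LinearMap.smul_apply, h.one_sm] at e2
  rw [← e2]
  linear_combination (norm := module) -e

theorem sm_conj (q : 𝕆) (u : H) : h.sm (oconj q) u = ot q • u - h.sm q u := by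
  rw [o_conj]; simp [h.one_sm]

theorem sm_key (p q r : 𝕆) (u : H) :
    h.sm (oconj q) (h.sm r (h.sm p u))
      = h.sm (omul (omul (oconj q) r) p) u
        + (h.sm r (h.sm (omul p q) u) - h.sm (omul r (omul p q)) u)
        - (h.sm (omul p q) (h.sm (oconj r) u) - h.sm p (h.sm q (h.sm (oconj r) u))) := by
  have e := congrArg (fun z => h.sm z u) (o_key p q r)
  simp only [map_add, map_sub, map_smul, LinearMap.add_apply, LinearMap.sub_apply,
    LinearMap.smul_apply, h.one_sm] at e
  have a1 := sm_jordan h p q (h.sm r u)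
  have a2 := congrArg (h.sm q) (sm_jordan h r p u)
  have a3 := sm_jordan h r (omul p q) u
  have a4 := sm_jordan h r p u
  have a5 := sm_jordan h p q u
  simp only [sm_conj, map_add, map_sub, map_smul] at *
  linear_combination (norm := module) a1 - a2 - a3 - e + ot q • a4 - ot r • a5

theorem re_symm (u v : H) : ore (h.inn u v) = ore (h.inn v u) := by
  rw [h.herm, o_re_conj]

theorem re_para (p : 𝕆) (u v : H) : ore (omul p (h.inn u v)) = ore (h.inn (h.sm p u) v) := by
  have := h.para p u v
  simp only [ore, Prod.fst_sub, Quaternion.re_sub] at *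
  linarith

theorem re_adj (p : 𝕆) (u v : H) :
    ore (h.inn u (h.sm p v)) = ore (h.inn (h.sm (oconj p) u) v) := by
  rw [re_symm, ← re_para, ← re_para, h.herm v u, ← o_re_conj, o_conj_mul, o_re_comm]
  congr 2
  simp [oconj]

theorem ore_add (x y : 𝕆) : ore (x + y) = ore x + ore y := rfl

theorem ore_sub (x y : 𝕆) : ore (x - y) = ore x - ore y := rfl

theorem omul_add' (r x y : 𝕆) : omul r (x + y) = omul r x + omul r y := by
  apply o_ext <;> simp [omul] <;> ring

theorem omul_sub' (r x y : 𝕆) : omul r (x - y) = omul r x - omul r y := by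
  apply o_ext <;> simp [omul] <;> ring

/-- The left associator is skew-adjoint for the real inner product. -/
theorem re_assoc_adj (p q : 𝕆) (v w : H) :
    ore (h.inn (h.sm (omul p q) v - h.sm p (h.sm q v)) w)
      = - ore (h.inn (h.sm (omul p q) w - h.sm p (h.sm q w)) v) := by
  have e : h.sm (oconj (omul p q)) w - h.sm (oconj q) (h.sm (oconj p) w)
      = -(h.sm (omul p q) w - h.sm p (h.sm q w)) := by
    have a1 := sm_jordan h p q w
    have e2 := congrArg (fun z => h.sm z w) (o_jordan p q)
    have e3 := congrArg (fun z => h.sm z w)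
      ((o_conj_mul p q).trans (show _ = ot q • ot p • oone - ot q • p - ot p • q + omul q p by
        apply o_ext <;> simp [omul, oconj, ot, ore, oone, one_c1, one_c2, one_c3, one_c4] <;> ring))
    simp only [map_add, map_sub, map_smul, LinearMap.add_apply, LinearMap.sub_apply,
      LinearMap.smul_apply, h.one_sm] at e2 e3
    rw [e3]
    simp only [sm_conj, map_add, map_sub, map_smul]
    linear_combination (norm := module) e2 - a1
  rw [re_symm, map_sub, ore_sub, re_adj, re_adj, re_adj, ← ore_sub, ← LinearMap.sub_apply,
    ← map_sub, e, map_neg]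
  simp [ore]

end

/-- In a pre-Hilbert left octonionic module:
inn (p*u) (q*v) = (p * inn u v)*conj(q) + [pq,u,v] + inn [p,q,v] u. -/
theorem stmt_5 {H : Type*} [AddCommGroup H] [Module ℝ H] (h : PreHilbO H)
    (p q : 𝕆) (u v : H) :
    h.inn (h.sm p u) (h.sm q v)
      = omul (omul p (h.inn u v)) (oconj q)
        + (h.inn (h.sm (omul p q) u) v - omul (omul p q) (h.inn u v))
        + h.inn (h.sm (omul p q) v - h.sm p (h.sm q v)) u := by

  apply o_nondeg
  intro r
  have k := congrArg (fun z => ore (h.inn z v)) (sm_key h p q r u)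
  have s := re_assoc_adj h p q v (h.sm (oconj r) u)
  have s2 : ore (h.inn (h.sm r (h.sm (omul p q) v - h.sm p (h.sm q v))) u)
      = ore (h.inn (h.sm (omul p q) v - h.sm p (h.sm q v)) (h.sm (oconj r) u)) := by
    rw [re_adj]; simp [oconj]
  rw [omul_add', omul_add', omul_sub', ore_add, ore_add, ore_sub, o_re_cycle, o_re_assoc,
    re_para, re_para, re_para, re_para, re_para, re_adj, s2, s, k]
  simp only [map_add, map_sub, LinearMap.add_apply, LinearMap.sub_apply, ore_add, ore_sub]
  ring
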